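/- Let p be a prime, let f_1(x), …, f_{n−1}(x), f_n(x) ∈ F_p[x] be an admissible set of n polynomials with deg f_i = m_i, write 𝓜_{n−1} = m_1 + ⋯ + m_{n−1}, and let t, A, B_1, …, B_{n−1} be positive integers with 𝔅 = B_1⋯B_{n−1}. Suppose the 𝔅·A products x^a f_1(x)^{b_1 t} ⋯ f_{n−1}(x)^{b_{n−1} t} (0 ≤ a < A, 0 ≤ b_i < B_i) are linearly independent over F_p and all have degree strictly less than p. Let Φ(x) = Σ_b H_b(x) f_1(x)^{b_1 t} ⋯ f_{n−1}(x)^{b_{n−1} t}, where the sum is over vectors b = (b_1, …, b_{n−1}) with 0 ≤ b_i < B_i and each H_b ∈ F_p[x] has deg H_b < A, and suppose Φ is not identically zero. If f_n(x)^t divides Φ(x), then t ≤ A·𝔅 + 𝓜_{n−1}·𝔅²/2 + 𝔅 − 1. -/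

import Mathlib

open Polynomial

/-- A set of polynomials `f 0, …, f (n-1)` is admissible if there exist points
`x 0, …, x (n-1)` with `f i (x i) = 0`, `f j (x i) ≠ 0` for `j ≠ i`,
and `f i 0 ≠ 0` for all `i`. -/
def AdmissibleSet {n : ℕ} {K : Type*} [CommRing K] (f : Fin n → Polynomial K) : Prop :=
  ∃ x : Fin n → K, (∀ i, (f i).eval (x i) = 0) ∧
    (∀ i j, j ≠ i → (f j).eval (x i) ≠ 0) ∧ (∀ i, (f i).eval 0 ≠ 0)

/-! Write `F = ∏ i, f i`, `M = deg F` and `u b = ∏ i, f i ^ e b i`, and let `s` be the number of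
`b` with `H b ≠ 0`; only these are considered. As `F * (u b)' = r b * u b` with `deg (r b) ≤ M`, one
gets `F ^ k * D ^ k (H b * u b) = q k b * u b` with `deg (q k b) ≤ A - 1 + k * M`, so the Wronskian
`W` of the polynomials `H b * u b` satisfies `(∏ k, F ^ k) * W = (∏ b, u b) * det q`.

The Wronskian is nonzero because the degrees are below the characteristic. Otherwise a nonzero
differential operator of order less than `s` kills the `s`-dimensional span of the `H b * u b`. The
degree of each nonzero element of the span is a root of the indicial polynomial of the operator,
which has degree less than `s`, but `s` different degrees occur in the span.

Adding up the columns of the Wronskian produces the derivatives of `Φ` of order less than `s`, all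
divisible by `g ^ (t - (s - 1))` if `g ^ t ∣ Φ`. If `g` is coprime to every `f i`, this power of `g`
divides `det q`, and `deg (det q) ≤ s * (A - 1) + M * s * (s - 1) / 2`. For an admissible set one
can take `g = X - x`, where `x` is a root of the last polynomial and of none of the others. -/

section Wronskian

lemma coeff_X_pow_mul_iterate_derivative {R : Type*} [Semiring R] (v : R[X]) (k m : ℕ) :
    (X ^ k * derivative^[k] v).coeff m = m.descFactorial k * v.coeff m := by
  rw [coeff_X_pow_mul']
  split_ifs with hkm
  · rw [coeff_iterate_derivative, Nat.sub_add_cancel hkm, nsmul_eq_mul]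
  · simp [Nat.descFactorial_eq_zero_iff_lt.2 (not_le.1 hkm)]

lemma natDegree_X_pow_mul_iterate_derivative_le {R : Type*} [Semiring R] (v : R[X]) (k : ℕ) :
    (X ^ k * derivative^[k] v).natDegree ≤ v.natDegree := by
  rw [natDegree_le_iff_coeff_eq_zero]
  intro m hm
  rw [coeff_X_pow_mul_iterate_derivative, coeff_eq_zero_of_natDegree_lt hm, mul_zero]

/-- The Wronskian matrix of `g 0, …, g (s - 1)`: its `(k, j)` entry is the `k`-th derivative of
`g j`. Mathlib's `Polynomial.wronskian` is the determinant for `s = 2` only. -/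
noncomputable def wronskianMatrix {R : Type*} [CommRing R] {s : ℕ} (g : Fin s → R[X]) :
    Matrix (Fin s) (Fin s) R[X] :=
  .of fun k j => derivative^[k] (g j)

/-- The differential operator `∑ k, e k * X ^ k * D ^ k` of order less than `s`. The factors
`X ^ k` make each term `X ^ k * D ^ k` preserve degrees. -/
noncomputable def eulerOperator {R : Type*} [CommRing R] {s : ℕ} (e : Fin s → R[X]) :
    R[X] →ₗ[R] R[X] :=
  ∑ k : Fin s, LinearMap.mulLeft R (e k * X ^ (k : ℕ)) ∘ₗ derivative ^ (k : ℕ)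

/-- The indicial polynomial in degree `n` of the operator `eulerOperator e`, whose value at `d` is
the factor by which the operator multiplies the coefficient of `X ^ d` when it carries degree `d`
to degree `n + d`. -/
noncomputable def indicialPolynomial {R : Type*} [CommRing R] {s : ℕ} (e : Fin s → R[X]) (n : ℕ) :
    R[X] :=
  ∑ k : Fin s, (e k).coeff n • descPochhammer R k

variable {R : Type*} [CommRing R] {s : ℕ}

lemma eulerOperator_apply (e : Fin s → R[X]) (v : R[X]) :
    eulerOperator e v = ∑ k : Fin s, e k * (X ^ (k : ℕ) * derivative^[k] v) := by
  simp [eulerOperator, Module.End.pow_apply]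

lemma coeff_eulerOperator_add_natDegree {e : Fin s → R[X]} {n : ℕ}
    (he : ∀ k, (e k).natDegree ≤ n) (v : R[X]) :
    (eulerOperator e v).coeff (n + v.natDegree) =
      (indicialPolynomial e n).eval (v.natDegree : R) * v.leadingCoeff := by
  rw [eulerOperator_apply, finsetSum_coeff, indicialPolynomial, eval_finsetSum, Finset.sum_mul]
  refine Finset.sum_congr rfl fun k _ => ?_
  rw [coeff_mul_add_eq_of_natDegree_le (he k) (natDegree_X_pow_mul_iterate_derivative_le v k),
    coeff_X_pow_mul_iterate_derivative, eval_smul, descPochhammer_eval_eq_descFactorial,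
    coeff_natDegree, smul_eq_mul, mul_assoc]

lemma linearIndependent_descPochhammer [IsDomain R] :
    LinearIndependent R (descPochhammer R) :=
  let S : Sequence R := ⟨descPochhammer R, fun k => by
    rw [degree_eq_natDegree (monic_descPochhammer R k).ne_zero, descPochhammer_natDegree]⟩
  S.linearIndependent

lemma indicialPolynomial_ne_zero [IsDomain R] {e : Fin s → R[X]} {n : ℕ} {k : Fin s}
    (hk : (e k).coeff n ≠ 0) : indicialPolynomial e n ≠ 0 := fun h =>
  hk <| Fintype.linearIndependent_iff.1
    (linearIndependent_descPochhammer.comp _ Fin.val_injective) (fun k => (e k).coeff n) h k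

lemma natDegree_indicialPolynomial_lt [IsDomain R] {e : Fin s → R[X]} {n : ℕ}
    (h : indicialPolynomial e n ≠ 0) : (indicialPolynomial e n).natDegree < s := by
  rw [natDegree_lt_iff_degree_lt h, ← mem_degreeLT]
  refine Submodule.sum_mem _ fun k _ => Submodule.smul_mem _ _ <| mem_degreeLT.2 ?_
  refine degree_le_natDegree.trans_lt ?_
  rw [descPochhammer_natDegree]
  exact_mod_cast k.2

lemma finrank_le_card_of_natDegree_mem [Nontrivial R] {V : Submodule R R[X]} {D : Finset ℕ}
    (h : ∀ v ∈ V, v ≠ 0 → v.natDegree ∈ D) : Module.finrank R V ≤ D.card := by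
  let φ : V →ₗ[R] (D → R) := LinearMap.pi fun d => lcoeff R d ∘ₗ V.subtype
  have hφ : Function.Injective φ := by
    rw [injective_iff_map_eq_zero]
    rintro ⟨v, hv⟩ hφv
    by_contra hne
    have hv0 : v ≠ 0 := fun h0 => hne (by simp [h0])
    exact hv0 <| leadingCoeff_eq_zero.1 <| congrFun hφv ⟨_, h v hv hv0⟩
  simpa using LinearMap.finrank_le_finrank_of_injective hφ

lemma dvd_det_mul_of_dvd_mulVec {n : Type*} [Fintype n] [DecidableEq n] {Q : Matrix n n R}
    {v : n → R} {d : R} (h : ∀ k, d ∣ (Q.mulVec v) k) (j : n) : d ∣ Q.det * v j := by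
  have hadj : Q.adjugate.mulVec (Q.mulVec v) = Q.det • v := by
    rw [Matrix.mulVec_mulVec, Matrix.adjugate_mul, Matrix.smul_mulVec, Matrix.one_mulVec]
  rw [← smul_eq_mul, ← Pi.smul_apply, ← hadj]
  exact Finset.dvd_sum fun k _ => (h k).mul_left _

lemma pow_dvd_det_wronskianMatrix [NeZero s] {g : Fin s → R[X]} {q : R[X]} {t : ℕ}
    (h : q ^ t ∣ ∑ j, g j) : q ^ (t - (s - 1)) ∣ (wronskianMatrix g).det := by
  rw [← mul_one (wronskianMatrix g).det]
  refine dvd_det_mul_of_dvd_mulVec (v := fun _ => 1) (fun k => ?_) 0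
  have hrow : (wronskianMatrix g).mulVec (fun _ => 1) k = derivative^[k] (∑ j, g j) := by
    simp [wronskianMatrix, Matrix.mulVec, dotProduct, iterate_derivative_sum]
  rw [hrow]
  exact (pow_dvd_pow q (by omega)).trans (pow_sub_dvd_iterate_derivative_of_pow_dvd k h)

lemma natDegree_det_le_sum {n : Type*} [Fintype n] [DecidableEq n] {Q : Matrix n n R[X]}
    {d : n → ℕ} (h : ∀ k j, (Q k j).natDegree ≤ d k) : Q.det.natDegree ≤ ∑ k, d k := by
  rw [Matrix.det_apply]
  refine natDegree_sum_le_of_forall_le _ _ fun σ _ => (natDegree_smul_le _ _).trans ?_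
  refine (natDegree_prod_le _ _).trans ?_
  rw [← Equiv.sum_comp σ d]
  exact Finset.sum_le_sum fun i _ => h _ _

lemma finrank_lt_of_le_ker_eulerOperator [IsDomain R] {e : Fin s → R[X]} {N : ℕ}
    (he : e ≠ 0) (hN : Set.InjOn (Nat.cast : ℕ → R) (Set.Iio N)) {V : Submodule R R[X]}
    (hVN : V ≤ degreeLT R N) (hV : V ≤ LinearMap.ker (eulerOperator e)) :
    Module.finrank R V < s := by
  classical
  obtain ⟨k₀, hk₀⟩ := Function.ne_iff.1 he
  obtain ⟨k, -, hmax⟩ := Finset.exists_max_image Finset.univ (fun k => (e k).degree) ⟨k₀, by simp⟩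
  have hk : e k ≠ 0 := fun h => hk₀ <| by simpa [h] using hmax k₀
  set n := (e k).natDegree
  set P := indicialPolynomial e n
  have hP : P ≠ 0 := indicialPolynomial_ne_zero (k := k) (leadingCoeff_ne_zero.2 hk)
  let D : Finset ℕ := {d ∈ Finset.range N | P.IsRoot d}
  have hdegree : ∀ v ∈ V, v ≠ 0 → v.natDegree ∈ D := by
    intro v hv hv0
    have hlt : v.natDegree < N := (natDegree_lt_iff_degree_lt hv0).2 (mem_degreeLT.1 (hVN hv))
    have hcoeff := coeff_eulerOperator_add_natDegree
      (fun j => natDegree_le_natDegree (hmax j (by simp))) v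
    rw [LinearMap.mem_ker.1 (hV hv), coeff_zero] at hcoeff
    have hroot : P.IsRoot v.natDegree :=
      (mul_eq_zero.1 hcoeff.symm).resolve_right (leadingCoeff_ne_zero.2 hv0)
    exact Finset.mem_filter.2 ⟨Finset.mem_range.2 hlt, hroot⟩
  calc Module.finrank R V ≤ D.card := finrank_le_card_of_natDegree_mem hdegree
    _ ≤ P.roots.toFinset.card := Finset.card_le_card_of_injOn Nat.cast
        (fun d hd => by simpa [hP] using (Finset.mem_filter.1 hd).2)
        (hN.mono fun d hd => Finset.mem_range.1 (Finset.mem_filter.1 hd).1)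
    _ ≤ P.natDegree := (Multiset.toFinset_card_le _).trans (card_roots' P)
    _ < s := natDegree_indicialPolynomial_lt hP

lemma det_wronskianMatrix_ne_zero [IsDomain R] {N : ℕ}
    (hN : Set.InjOn (Nat.cast : ℕ → R) (Set.Iio N))
    {g : Fin s → R[X]} (hg : LinearIndependent R g) (hgN : ∀ j, (g j).degree < N) :
    (wronskianMatrix g).det ≠ 0 := by
  intro hdet
  obtain ⟨c, hc, hcg⟩ := Matrix.exists_vecMul_eq_zero_iff.2 hdet
  let e : Fin s → R[X] := fun k => c k * X ^ (s - (k : ℕ))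
  have he : e ≠ 0 := fun h => hc <| funext fun k => by simpa [e] using congrFun h k
  have hker (j : Fin s) : eulerOperator e (g j) = 0 := by
    have hterm (k : Fin s) : e k * (X ^ (k : ℕ) * derivative^[k] (g j)) =
        X ^ s * (c k * derivative^[k] (g j)) := by
      linear_combination c k * derivative^[k] (g j) * pow_sub_mul_pow (X : R[X]) k.2.le
    have hcol : ∑ k : Fin s, c k * derivative^[k] (g j) = 0 := congrFun hcg j
    rw [eulerOperator_apply, Finset.sum_congr rfl fun k _ => hterm k, ← Finset.mul_sum, hcol,
      mul_zero]
  have hlt := finrank_lt_of_le_ker_eulerOperator he hN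
    (V := Submodule.span R (Set.range g))
    (Submodule.span_le.2 <| Set.range_subset_iff.2 fun j => mem_degreeLT.2 (hgN j))
    (Submodule.span_le.2 <| Set.range_subset_iff.2 hker)
  rw [finrank_span_eq_card hg, Fintype.card_fin] at hlt
  exact hlt.false

end Wronskian

section LogarithmicDerivative

lemma mul_derivative_pow {R : Type*} [CommSemiring R] (f : R[X]) (n : ℕ) :
    f * derivative (f ^ n) = n * derivative f * f ^ n := by
  cases n with
  | zero => simp
  | succ n => simp only [derivative_pow_succ, map_add, map_natCast, map_one]; push_cast; ring

variable {R : Type*} [CommRing R]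

lemma exists_prod_mul_derivative_prod_pow_eq {ι : Type*} (S : Finset ι) (f : ι → R[X])
    (e : ι → ℕ) :
    ∃ r : R[X], r.natDegree ≤ ∑ i ∈ S, (f i).natDegree ∧
      (∏ i ∈ S, f i) * derivative (∏ i ∈ S, f i ^ e i) = r * ∏ i ∈ S, f i ^ e i := by
  induction S using Finset.cons_induction with
  | empty => exact ⟨0, by simp, by simp⟩
  | cons a S ha ih =>
    obtain ⟨r, hr, h⟩ := ih
    refine ⟨e a * derivative (f a) * ∏ i ∈ S, f i + f a * r, ?_, ?_⟩
    · rw [Finset.sum_cons]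
      have hderiv : (e a * derivative (f a)).natDegree ≤ (f a).natDegree := by
        rw [← C_eq_natCast]
        exact (natDegree_C_mul_le _ _).trans
          ((natDegree_derivative_le _).trans (Nat.sub_le _ _))
      exact natDegree_add_le_of_degree_le
        (natDegree_mul_le_of_le hderiv (natDegree_prod_le _ _)) (natDegree_mul_le_of_le le_rfl hr)
    · rw [Finset.prod_cons, Finset.prod_cons, derivative_mul]
      linear_combination (∏ i ∈ S, f i) * (∏ i ∈ S, f i ^ e i) * mul_derivative_pow (f a) (e a) +
        f a * f a ^ e a * h

lemma exists_pow_mul_iterate_derivative_mul_eq {F r u h : R[X]} {M d : ℕ}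
    (hu : F * derivative u = r * u) (hF : F.natDegree ≤ M) (hr : r.natDegree ≤ M)
    (hh : h.natDegree ≤ d) (k : ℕ) :
    ∃ q : R[X], q.natDegree ≤ d + k * M ∧ F ^ k * derivative^[k] (h * u) = q * u := by
  induction k with
  | zero => exact ⟨h, by simpa, by simp⟩
  | succ k ih =>
    obtain ⟨q, hq, hqu⟩ := ih
    refine ⟨F * derivative q + (r - k * derivative F) * q, ?_, ?_⟩
    · have hkF : (k * derivative F).natDegree ≤ M := by
        rw [← C_eq_natCast]
        exact (natDegree_C_mul_le _ _).trans
          ((natDegree_derivative_le _).trans ((Nat.sub_le _ _).trans hF))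
      rw [show d + (k + 1) * M = M + (d + k * M) by ring]
      exact natDegree_add_le_of_degree_le
        (natDegree_mul_le_of_le hF ((natDegree_derivative_le _).trans ((Nat.sub_le _ _).trans hq)))
        (natDegree_mul_le_of_le ((natDegree_sub_le _ _).trans (max_le hr hkF)) hq)
    · have hderiv := congrArg derivative hqu
      rw [derivative_mul, derivative_mul] at hderiv
      rw [Function.iterate_succ_apply']
      linear_combination F * hderiv - derivative^[k] (h * u) * mul_derivative_pow F k + q * hu -
        k * derivative F * hqu

end LogarithmicDerivative

lemma linearIndependent_sum_smul {R M α β : Type*} [Ring R] [NoZeroDivisors R] [AddCommGroup M]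
    [Module R M] [Fintype α] [Finite β] {v : α × β → M} (hv : LinearIndependent R v)
    {c : β → α → R} (hc : ∀ b, c b ≠ 0) :
    LinearIndependent R fun b => ∑ a, c b a • v (a, b) := by
  have := Fintype.ofFinite β
  rw [Fintype.linearIndependent_iff] at hv ⊢
  intro g hg b
  obtain ⟨a, ha⟩ := Function.ne_iff.1 (hc b)
  have hzero : ∑ ab : α × β, (g ab.2 * c ab.2 ab.1) • v ab = 0 := by
    simpa only [Fintype.sum_prod_type_right, mul_smul, ← Finset.smul_sum] using hg
  exact (mul_eq_zero.1 (hv _ hzero (a, b))).resolve_right ha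

section DivisibilityBound

variable {R : Type*} [CommRing R] [IsDomain R] {N : ℕ}

lemma linearIndependent_mul_of_X_pow_mul {β : Type*} [Finite β] {A : ℕ} {u H : β → R[X]}
    (hind : LinearIndependent R fun ab : Fin A × β => X ^ (ab.1 : ℕ) * u ab.2)
    (hH : ∀ b, (H b).degree < A) (hH0 : ∀ b, H b ≠ 0) :
    LinearIndependent R fun b => H b * u b := by
  have hlt (b : β) : (H b).natDegree < A := (natDegree_lt_iff_degree_lt (hH0 b)).2 (hH b)
  have hexpand (b : β) :
      H b * u b = ∑ a : Fin A, (H b).coeff a • (X ^ (a : ℕ) * u b) := by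
    conv_lhs => rw [as_sum_range' _ _ (hlt b), ← Fin.sum_univ_eq_sum_range
      (fun a => monomial a ((H b).coeff a)), Finset.sum_mul]
    simp only [← C_mul_X_pow_eq_monomial, smul_eq_C_mul, mul_assoc]
  simp only [hexpand]
  exact linearIndependent_sum_smul hind fun b h0 =>
    leadingCoeff_ne_zero.2 (hH0 b) (congrFun h0 ⟨_, hlt b⟩)

lemma mul_natDegree_le_of_pow_dvd_sum {s : ℕ} [NeZero s] {F g : R[X]} {u r h : Fin s → R[X]}
    {M d t : ℕ} (hN : Set.InjOn (Nat.cast : ℕ → R) (Set.Iio N)) (hF0 : F ≠ 0)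
    (hF : F.natDegree ≤ M) (hr : ∀ j, (r j).natDegree ≤ M)
    (hu : ∀ j, F * derivative (u j) = r j * u j) (hh : ∀ j, (h j).natDegree ≤ d)
    (hind : LinearIndependent R fun j => h j * u j) (hdeg : ∀ j, (h j * u j).degree < N)
    (hcop : ∀ j, IsCoprime g (u j)) (hdvd : g ^ t ∣ ∑ j, h j * u j) :
    (t - (s - 1)) * g.natDegree ≤ s * d + s.choose 2 * M := by
  choose q hqdeg hq using fun (k : Fin s) (j : Fin s) =>
    exists_pow_mul_iterate_derivative_mul_eq (hu j) hF (hr j) (hh j) k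
  let W := wronskianMatrix fun j => h j * u j
  let Q : Matrix (Fin s) (Fin s) R[X] := .of q
  have hWQ : (∏ k : Fin s, F ^ (k : ℕ)) * W.det = (∏ j, u j) * Q.det := by
    rw [← Matrix.det_mul_column, ← Matrix.det_mul_row]
    congr 1
    ext1 k j
    exact (hq k j).trans (mul_comm _ _)
  have hQ0 : Q.det ≠ 0 := by
    refine right_ne_zero_of_mul (hWQ ▸ mul_ne_zero ?_ (det_wronskianMatrix_ne_zero hN hind hdeg))
    exact Finset.prod_ne_zero_iff.2 fun k _ => pow_ne_zero _ hF0
  have hdvdQ : g ^ (t - (s - 1)) ∣ Q.det :=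
    (IsCoprime.pow_left (IsCoprime.prod_right fun j _ => hcop j)).dvd_of_dvd_mul_left <|
      hWQ ▸ (pow_dvd_det_wronskianMatrix hdvd).mul_left _
  calc (t - (s - 1)) * g.natDegree = (g ^ (t - (s - 1))).natDegree := (natDegree_pow _ _).symm
    _ ≤ Q.det.natDegree := natDegree_le_of_dvd hdvdQ hQ0
    _ ≤ ∑ k : Fin s, (d + k * M) := natDegree_det_le_sum hqdeg
    _ = s * d + s.choose 2 * M := by
      rw [Fin.sum_univ_eq_sum_range (fun k => d + k * M), Finset.sum_add_distrib,
        ← Finset.sum_mul, Finset.sum_range_id, Nat.choose_two_right]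
      simp

variable {ι β : Type*} [Fintype ι] [Fintype β] {f : ι → R[X]} {g : R[X]} {e : β → ι → ℕ}
  {A t : ℕ} {H : β → R[X]}

lemma lt_of_pow_dvd_sum_mul_prod_pow_of_ne_zero [Nonempty β]
    (hN : Set.InjOn (Nat.cast : ℕ → R) (Set.Iio N)) (hg : 0 < g.natDegree)
    (hcop : ∀ i, IsCoprime g (f i))
    (hind : LinearIndependent R fun ab : Fin A × β => X ^ (ab.1 : ℕ) * ∏ i, f i ^ e ab.2 i)
    (hdeg : ∀ (a : Fin A) (b : β), (X ^ (a : ℕ) * ∏ i, f i ^ e b i).natDegree < N)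
    (hH : ∀ b, (H b).degree < A) (hH0 : ∀ b, H b ≠ 0)
    (hdvd : g ^ t ∣ ∑ b, H b * ∏ i, f i ^ e b i) :
    t < A * Fintype.card β + (∑ i, (f i).natDegree) * (Fintype.card β).choose 2 := by
  have hlt (b : β) : (H b).natDegree < A := (natDegree_lt_iff_degree_lt (hH0 b)).2 (hH b)
  have hf0 (i : ι) : f i ≠ 0 := fun h =>
    hg.ne' (natDegree_eq_zero_of_isUnit (isCoprime_zero_right.1 (h ▸ hcop i)))
  have hdegH (b : β) : (H b * ∏ i, f i ^ e b i).degree < N := by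
    rw [degree_mul, degree_eq_natDegree (hH0 b), ← degree_X_pow (R := R), ← degree_mul]
    exact degree_le_natDegree.trans_lt (mod_cast hdeg ⟨_, hlt b⟩ b)
  have hindH : LinearIndependent R fun b => H b * ∏ i, f i ^ e b i :=
    linearIndependent_mul_of_X_pow_mul hind hH hH0
  choose r hrdeg hr using fun b => exists_prod_mul_derivative_prod_pow_eq Finset.univ f (e b)
  obtain ⟨s, hs⟩ : ∃ s, Fintype.card β = s := ⟨_, rfl⟩
  let ε : Fin s ≃ β := (Fintype.equivFinOfCardEq hs).symm
  have : NeZero s := ⟨hs ▸ Fintype.card_ne_zero⟩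
  have hbound := mul_natDegree_le_of_pow_dvd_sum (h := fun j => H (ε j)) (d := A - 1) hN
    (Finset.prod_ne_zero_iff.2 fun i _ => hf0 i) (natDegree_prod_le _ _)
    (fun j => hrdeg (ε j)) (fun j => hr (ε j)) (fun j => Nat.le_sub_one_of_lt (hlt (ε j)))
    (hindH.comp ε ε.injective) (fun j => hdegH (ε j))
    (fun j => IsCoprime.prod_right fun i _ => (hcop i).pow_right)
    ((Equiv.sum_comp ε fun b => H b * ∏ i, f i ^ e b i).symm ▸ hdvd)
  have hA : 0 < A := (Nat.zero_le _).trans_lt (hlt (Classical.arbitrary β))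
  have hle := (Nat.le_mul_of_pos_right _ hg).trans hbound
  rw [Nat.mul_sub_one, mul_comm _ A, mul_comm (Nat.choose _ 2)] at hle
  have hsA : s ≤ A * s := Nat.le_mul_of_pos_left s hA
  have hs0 : 0 < s := Nat.pos_of_neZero s
  rw [hs]
  omega

theorem key_divisibility_bound_general (hN : Set.InjOn (Nat.cast : ℕ → R) (Set.Iio N))
    (hg : 0 < g.natDegree) (hcop : ∀ i, IsCoprime g (f i))
    (hind : LinearIndependent R fun ab : Fin A × β => X ^ (ab.1 : ℕ) * ∏ i, f i ^ e ab.2 i)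
    (hdeg : ∀ (a : Fin A) (b : β), (X ^ (a : ℕ) * ∏ i, f i ^ e b i).natDegree < N)
    (hH : ∀ b, (H b).degree < A) (hΦ : ∑ b, H b * ∏ i, f i ^ e b i ≠ 0)
    (hdvd : g ^ t ∣ ∑ b, H b * ∏ i, f i ^ e b i) :
    t < A * Fintype.card β + (∑ i, (f i).natDegree) * (Fintype.card β).choose 2 := by
  classical
  let S := {b // H b ≠ 0}
  obtain ⟨b₀, -, hb₀⟩ := Finset.exists_ne_zero_of_sum_ne_zero hΦ
  have : Nonempty S := ⟨b₀, left_ne_zero_of_mul hb₀⟩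
  have hsum : ∑ b, H b * ∏ i, f i ^ e b i = ∑ b : S, H b * ∏ i, f i ^ e b i := by
    rw [← Finset.sum_filter_of_ne fun b _ hb => left_ne_zero_of_mul hb]
    exact Finset.sum_subtype _ (by simp) _
  have hcard : Fintype.card S ≤ Fintype.card β := Fintype.card_subtype_le _
  calc t < A * Fintype.card S + (∑ i, (f i).natDegree) * (Fintype.card S).choose 2 :=
        lt_of_pow_dvd_sum_mul_prod_pow_of_ne_zero (e := fun b : S => e b) hN hg hcop
          (hind.comp (Prod.map id Subtype.val)
            (Function.injective_id.prodMap Subtype.val_injective))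
          (fun a b => hdeg a b) (fun b => hH b) (fun b => b.2) (hsum ▸ hdvd)
    _ ≤ A * Fintype.card β + (∑ i, (f i).natDegree) * (Fintype.card β).choose 2 := by gcongr

end DivisibilityBound

lemma AdmissibleSet.exists_root_isCoprime {n : ℕ} {K : Type*} [Field K] {f : Fin n → K[X]}
    (hf : AdmissibleSet f) (i : Fin n) :
    ∃ x, X - C x ∣ f i ∧ ∀ j ≠ i, IsCoprime (X - C x) (f j) := by
  obtain ⟨x, hroot, hne, -⟩ := hf
  refine ⟨x i, dvd_iff_isRoot.2 (hroot i), fun j hj => ?_⟩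
  rw [(irreducible_X_sub_C _).coprime_iff_not_dvd, dvd_iff_isRoot]
  exact hne i j hj

lemma cast_le_of_lt_add_mul_choose_two {t A M B : ℕ} (h : t < A * B + M * B.choose 2) :
    (t : ℝ) ≤ A * B + M * (B : ℝ) ^ 2 / 2 + B - 1 := by
  have hcast : (t : ℝ) + 1 ≤ A * B + M * (B * (B - 1) / 2) := by
    rw [← Nat.cast_choose_two]
    exact_mod_cast h
  have : (0 : ℝ) ≤ M * B := by positivity
  linarith [B.cast_nonneg (α := ℝ)]

/-- Key step of the induction: if the products
`x^a f_1^{b_1 t} ⋯ f_{n-1}^{b_{n-1} t}` (`a < A`, `b_i < B_i`) are linearly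
independent over `F_p` of degree `< p`, `Φ = Σ_b H_b f_1^{b_1 t} ⋯ f_{n-1}^{b_{n-1} t} ≠ 0`
with `deg H_b < A`, and `f_n^t ∣ Φ`, then `t ≤ A 𝔅 + 𝓜_{n-1} 𝔅²/2 + 𝔅 − 1`
where `𝔅 = B_1 ⋯ B_{n-1}`. -/
theorem key_divisibility_bound (p n : ℕ) [Fact p.Prime] (hn : 1 ≤ n)
    (f : Fin n → Polynomial (ZMod p)) (m : Fin n → ℕ)
    (hdeg : ∀ i, (f i).natDegree = m i) (hadm : AdmissibleSet f)
    (t A : ℕ) (B : Fin (n - 1) → ℕ) (ht : 0 < t) (hA : 0 < A) (hB : ∀ i, 0 < B i)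
    (hind : LinearIndependent (ZMod p)
      (fun ab : Fin A × (∀ i : Fin (n - 1), Fin (B i)) =>
        (X : Polynomial (ZMod p)) ^ (ab.1 : ℕ) *
          ∏ i, (f (Fin.castLE (Nat.sub_le n 1) i)) ^ ((ab.2 i : ℕ) * t)))
    (hdegsmall : ∀ (a : Fin A) (b : ∀ i : Fin (n - 1), Fin (B i)),
      ((X : Polynomial (ZMod p)) ^ (a : ℕ) *
        ∏ i, (f (Fin.castLE (Nat.sub_le n 1) i)) ^ ((b i : ℕ) * t)).natDegree < p)
    (H : (∀ i : Fin (n - 1), Fin (B i)) → Polynomial (ZMod p))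
    (hH : ∀ b, (H b).degree < (A : ℕ))
    (Φ : Polynomial (ZMod p))
    (hΦ : Φ = ∑ b : ∀ i : Fin (n - 1), Fin (B i),
      H b * ∏ i, (f (Fin.castLE (Nat.sub_le n 1) i)) ^ ((b i : ℕ) * t))
    (hΦ0 : Φ ≠ 0)
    (hdvd : (f ⟨n - 1, by omega⟩) ^ t ∣ Φ) :
    (t : ℝ) ≤ (A : ℝ) * (∏ i, (B i : ℝ)) +
      (∑ i : Fin (n - 1), (m (Fin.castLE (Nat.sub_le n 1) i) : ℝ)) * (∏ i, (B i : ℝ)) ^ 2 / 2 +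
      (∏ i, (B i : ℝ)) - 1 := by
  subst hΦ
  obtain ⟨x, hx, hcop⟩ := hadm.exists_root_isCoprime ⟨n - 1, by omega⟩
  have hlt := key_divisibility_bound_general (f := fun i => f (Fin.castLE (Nat.sub_le n 1) i))
    (e := fun (b : ∀ i, Fin (B i)) i => b i * t) (CharP.natCast_injOn_Iio (ZMod p) p)
    (by simp : 0 < (X - C x).natDegree) (fun i => hcop _ (Fin.ne_of_lt i.2)) hind hdegsmall hH
    hΦ0 ((pow_dvd_pow_of_dvd hx t).trans hdvd)
  simpa [hdeg] using cast_le_of_lt_add_mul_choose_two hlt
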